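/- Let 0 < c ≤ 1 and I > 0, and define g_c(ℓ) = 4cℓ² ∫₀^∞ u² Φ(−uℓ√(cI)/2) φ(u) du for ℓ > 0. Then there exists ℓ_opt > 0 with ℓ_opt√(cI) ∈ [2.4255, 2.4265] such that g_c(ℓ_opt) ≥ g_c(ℓ) for all ℓ > 0, and for this ℓ_opt the acceptance rate 4 ∫₀^∞ Φ(−uℓ_opt√(cI)/2) φ(u) du lies in [0.4385, 0.4395]. -/

import Mathlib

/-!
With `b = ℓ√(cI)/2` both integrals have closed forms. Differentiation under the integral sign
gives `d/db ∫₀^∞ Φ(-ub) φ(u) du = -1 / (2π(1 + b²))`, hence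
`∫₀^∞ Φ(-ub) φ(u) du = (π/2 - arctan b) / (2π)` (`integral_cdf_mul_pdf`), and integration by parts
gives `∫₀^∞ u² Φ(-ub) φ(u) du = (π/2 - arctan b - b/(1 + b²)) / (2π)`
(`integral_sq_mul_cdf_mul_pdf`).

So the speed is a positive multiple of `h(b) = b² (π/2 - arctan b - b/(1 + b²))`, with
`h'(b) = 2 b k(b)` for `k(b) = π/2 - arctan b - b/(1 + b²) - b/(1 + b²)²` and
`k'(b) = (b² - 3)/(1 + b²)³`. The function `k` decreases on `[0, √3]`, then increases towards its
limit `0`, so it is nonpositive on `[√3, ∞)`; any zero of `k` in `[0, √3]` is therefore a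
global maximizer of `h` (`speedProfile_le_of_speedSlope_eq_zero`). Taylor bounds for
`arctan b = π/4 + arctan ((b - 1)/(b + 1))` show that `k` changes sign on `[1.21275, 1.21325]`,
and on that interval the acceptance rate `(2/π)(π/2 - arctan b)` lies in `[0.4385, 0.4395]`.
-/

open MeasureTheory ProbabilityTheory

/-- The standard normal cumulative distribution function `Φ`. -/
noncomputable def stdNormalCDF (x : ℝ) : ℝ := cdf (gaussianReal 0 1) x

/-- The standard normal density `φ`. -/
noncomputable def stdNormalPDF (x : ℝ) : ℝ := gaussianPDFReal 0 1 x

/-- The diffusion speed of additive TMCMC within Gibbs in the i.i.d. set-up: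
`g_c(ℓ) = 4cℓ² ∫₀^∞ u² Φ(−uℓ√(cI)/2) φ(u) du`. -/
noncomputable def tmcmcGibbsSpeed (c I ℓ : ℝ) : ℝ :=
  4 * c * ℓ ^ 2 * ∫ u in Set.Ioi (0 : ℝ),
    u ^ 2 * stdNormalCDF (-(u * ℓ * Real.sqrt (c * I)) / 2) * stdNormalPDF u

open Set Filter Topology

/-! ### The Gaussian integrals in closed form -/

lemma stdNormalPDF_eq (u : ℝ) :
    stdNormalPDF u = (√(2 * Real.pi))⁻¹ * Real.exp (-(1 / 2) * u ^ 2) := by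
  simp only [stdNormalPDF, gaussianPDFReal, NNReal.coe_one, mul_one, sub_zero]
  congr 2
  ring

lemma stdNormalPDF_nonneg (u : ℝ) : 0 ≤ stdNormalPDF u := by
  rw [stdNormalPDF_eq]; positivity

lemma continuous_stdNormalPDF : Continuous stdNormalPDF := by
  have h : stdNormalPDF = fun u => (√(2 * Real.pi))⁻¹ * Real.exp (-(1 / 2) * u ^ 2) :=
    funext stdNormalPDF_eq
  rw [h]; fun_prop

lemma hasDerivAt_stdNormalPDF (u : ℝ) : HasDerivAt stdNormalPDF (-u * stdNormalPDF u) u := by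
  have h : stdNormalPDF = fun u => (√(2 * Real.pi))⁻¹ * Real.exp (-(1 / 2) * u ^ 2) :=
    funext stdNormalPDF_eq
  rw [h]
  have h1 : HasDerivAt (fun u : ℝ => -(1 / 2) * u ^ 2) (-u) u := by
    refine HasDerivAt.congr_deriv ((hasDerivAt_pow 2 u).const_mul (-(1 / 2) : ℝ)) ?_
    push_cast; ring
  refine HasDerivAt.congr_deriv ((h1.exp).const_mul ((√(2 * Real.pi))⁻¹)) ?_
  ring

/-- Every nonnegative power of `u` is integrable against the Gaussian density. -/
lemma integrable_pow_mul_stdNormalPDF (n : ℕ) :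
    Integrable (fun u : ℝ => u ^ n * stdNormalPDF u) := by
  have h := integrable_rpow_mul_exp_neg_mul_sq (b := 1 / 2) (by norm_num) (s := n)
    (by have : (0 : ℝ) ≤ n := Nat.cast_nonneg n
        linarith)
  refine (h.const_mul ((√(2 * Real.pi))⁻¹)).congr (ae_of_all _ fun u => ?_)
  simp only [Real.rpow_natCast, stdNormalPDF_eq]
  ring

lemma integral_Ioi_stdNormalPDF : ∫ u in Ioi (0 : ℝ), stdNormalPDF u = 1 / 2 := by
  simp only [stdNormalPDF_eq]
  rw [integral_const_mul, integral_gaussian_Ioi]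
  have h : Real.pi / (1 / 2) = 2 * Real.pi := by ring
  have h2 : √(2 * Real.pi) ≠ 0 := by positivity
  rw [h]
  field_simp

lemma stdNormalCDF_eq_integral (x : ℝ) :
    stdNormalCDF x = ∫ u in Iic x, stdNormalPDF u := by
  rw [stdNormalCDF, cdf_eq_real, measureReal_def,
    gaussianReal_apply_eq_integral _ one_ne_zero,
    ENNReal.toReal_ofReal (integral_nonneg fun u => gaussianPDFReal_nonneg 0 1 u)]
  rfl

lemma stdNormalCDF_zero : stdNormalCDF 0 = 1 / 2 := by
  rw [stdNormalCDF_eq_integral, ← integral_Ioi_stdNormalPDF]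
  have h := integral_comp_neg_Iic 0 stdNormalPDF
  rw [neg_zero] at h
  rw [← h]
  simp [stdNormalPDF_eq]

lemma hasDerivAt_stdNormalCDF (x : ℝ) : HasDerivAt stdNormalCDF (stdNormalPDF x) x := by
  have hi : Integrable stdNormalPDF := by
    simpa using integrable_pow_mul_stdNormalPDF 0
  have h : stdNormalCDF = fun x => stdNormalCDF 0 + ∫ u in (0 : ℝ)..x, stdNormalPDF u := by
    ext x
    rw [← intervalIntegral.integral_Iic_sub_Iic hi.integrableOn hi.integrableOn,
      stdNormalCDF_eq_integral, stdNormalCDF_eq_integral]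
    ring
  rw [h]
  exact (intervalIntegral.integral_hasDerivAt_right hi.intervalIntegrable
    continuous_stdNormalPDF.stronglyMeasurable.stronglyMeasurableAtFilter
    continuous_stdNormalPDF.continuousAt).const_add _

lemma continuous_stdNormalCDF : Continuous stdNormalCDF :=
  continuous_iff_continuousAt.2 fun x => (hasDerivAt_stdNormalCDF x).continuousAt

lemma integrable_pow_mul_cdf_mul_pdf (n : ℕ) (b : ℝ) :
    Integrable (fun u : ℝ => u ^ n * stdNormalCDF (-(u * b)) * stdNormalPDF u) := by
  refine (integrable_pow_mul_stdNormalPDF n).mono ?_ (ae_of_all _ fun u => ?_)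
  · have := continuous_stdNormalCDF
    have := continuous_stdNormalPDF
    exact Continuous.aestronglyMeasurable (by fun_prop)
  · have h0 : 0 ≤ stdNormalCDF (-(u * b)) := cdf_nonneg _ _
    have h1 : stdNormalCDF (-(u * b)) ≤ 1 := cdf_le_one _ _
    rw [norm_mul, norm_mul, norm_mul, Real.norm_of_nonneg h0]
    gcongr
    exact mul_le_of_le_one_right (norm_nonneg _) h1

lemma pdf_mul_pdf (u b : ℝ) : stdNormalPDF (u * b) * stdNormalPDF u =
    (2 * Real.pi)⁻¹ * Real.exp (-((1 + b ^ 2) / 2) * u ^ 2) := by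
  have hs : (√(2 * Real.pi))⁻¹ * (√(2 * Real.pi))⁻¹ = (2 * Real.pi)⁻¹ := by
    rw [← mul_inv, Real.mul_self_sqrt (by positivity)]
  rw [stdNormalPDF_eq, stdNormalPDF_eq, ← hs]
  have he : Real.exp (-((1 + b ^ 2) / 2) * u ^ 2) =
      Real.exp (-(1 / 2) * (u * b) ^ 2) * Real.exp (-(1 / 2) * u ^ 2) := by
    rw [← Real.exp_add]; congr 1; ring
  rw [he]; ring

lemma integrable_mul_pdf_mul_pdf (b : ℝ) :
    Integrable (fun u : ℝ => u * (stdNormalPDF (u * b) * stdNormalPDF u)) := by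
  simp only [pdf_mul_pdf]
  refine ((integrable_mul_exp_neg_mul_sq (b := (1 + b ^ 2) / 2) (by positivity)).const_mul
    (2 * Real.pi)⁻¹).congr (ae_of_all _ fun u => ?_)
  ring

lemma integral_mul_pdf_mul_pdf (b : ℝ) :
    ∫ u in Ioi (0 : ℝ), u * (stdNormalPDF (u * b) * stdNormalPDF u) =
      (2 * Real.pi)⁻¹ * (1 + b ^ 2)⁻¹ := by
  have hd : ∀ u : ℝ, HasDerivAt
      (fun u => -(2 * Real.pi)⁻¹ * (1 + b ^ 2)⁻¹ * Real.exp (-((1 + b ^ 2) / 2) * u ^ 2))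
      (u * (stdNormalPDF (u * b) * stdNormalPDF u)) u := by
    intro u
    have h1 : HasDerivAt (fun u : ℝ => -((1 + b ^ 2) / 2) * u ^ 2) (-(1 + b ^ 2) * u) u := by
      refine HasDerivAt.congr_deriv ((hasDerivAt_pow 2 u).const_mul (-((1 + b ^ 2) / 2) : ℝ)) ?_
      push_cast; ring
    refine HasDerivAt.congr_deriv ((h1.exp).const_mul (-(2 * Real.pi)⁻¹ * (1 + b ^ 2)⁻¹)) ?_
    rw [pdf_mul_pdf]
    have : 1 + b ^ 2 ≠ 0 := by positivity
    field_simp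
  have hexp : Integrable
      (fun u => -(2 * Real.pi)⁻¹ * (1 + b ^ 2)⁻¹ * Real.exp (-((1 + b ^ 2) / 2) * u ^ 2)) :=
    (integrable_exp_neg_mul_sq (by positivity)).const_mul _
  have ht := tendsto_zero_of_hasDerivAt_of_integrableOn_Ioi (a := 0) (fun u _ => hd u)
    (integrable_mul_pdf_mul_pdf b).integrableOn hexp.integrableOn
  rw [integral_Ioi_of_hasDerivAt_of_tendsto' (fun u _ => hd u)
    (integrable_mul_pdf_mul_pdf b).integrableOn ht]
  simp

/-- The derivative in `b` of `∫₀^∞ Φ(-ub) φ(u) du`, by differentiation under the integral. -/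
lemma hasDerivAt_integral_cdf_mul_pdf (b : ℝ) :
    HasDerivAt (fun b => ∫ u in Ioi (0 : ℝ), stdNormalCDF (-(u * b)) * stdNormalPDF u)
      (-((2 * Real.pi)⁻¹ * (1 + b ^ 2)⁻¹)) b := by
  have hc := continuous_stdNormalCDF
  have hp := continuous_stdNormalPDF
  have hsymm : ∀ x, stdNormalPDF (-x) = stdNormalPDF x := fun x => by simp [stdNormalPDF_eq]
  have key := hasDerivAt_integral_of_dominated_loc_of_deriv_le (𝕜 := ℝ)
    (μ := volume.restrict (Ioi (0 : ℝ))) (s := univ) (x₀ := b)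
    (F := fun b u => stdNormalCDF (-(u * b)) * stdNormalPDF u)
    (F' := fun b u => -(u * (stdNormalPDF (u * b) * stdNormalPDF u)))
    (bound := fun u => (√(2 * Real.pi))⁻¹ * ‖u ^ 1 * stdNormalPDF u‖)
    univ_mem (Eventually.of_forall fun x => Continuous.aestronglyMeasurable (by fun_prop))
    (by simpa using (integrable_pow_mul_cdf_mul_pdf 0 b).restrict (s := Ioi (0 : ℝ)))
    (Continuous.aestronglyMeasurable (by fun_prop))
    (ae_of_all _ fun u x _ => ?_)
    ((integrable_pow_mul_stdNormalPDF 1).norm.const_mul _).integrableOn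
    (ae_of_all _ fun u x _ => ?_)
  · refine HasDerivAt.congr_deriv (key.2) ?_
    rw [integral_neg, integral_mul_pdf_mul_pdf]
  · have hb : stdNormalPDF (u * x) ≤ (√(2 * Real.pi))⁻¹ := by
      rw [stdNormalPDF_eq]
      refine mul_le_of_le_one_right (by positivity) (Real.exp_le_one_iff.2 ?_)
      nlinarith [sq_nonneg (u * x)]
    rw [norm_neg, pow_one, norm_mul, norm_mul, norm_mul,
      Real.norm_of_nonneg (stdNormalPDF_nonneg (u * x))]
    calc ‖u‖ * (stdNormalPDF (u * x) * ‖stdNormalPDF u‖)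
        = stdNormalPDF (u * x) * (‖u‖ * ‖stdNormalPDF u‖) := by ring
      _ ≤ _ := by gcongr
  · have h1 : HasDerivAt (fun x : ℝ => -(u * x)) (-u) x := by
      simpa using ((hasDerivAt_id x).const_mul u).fun_neg
    refine HasDerivAt.congr_deriv (((hasDerivAt_stdNormalCDF (-(u * x))).comp x h1).mul_const (stdNormalPDF u)) ?_
    rw [hsymm]; ring

/-- Closed form of the acceptance integral: both sides have the same derivative in `b` and
agree at `b = 0`. -/
lemma integral_cdf_mul_pdf (b : ℝ) :
    ∫ u in Ioi (0 : ℝ), stdNormalCDF (-(u * b)) * stdNormalPDF u =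
      (2 * Real.pi)⁻¹ * (Real.pi / 2 - Real.arctan b) := by
  have hd : ∀ b : ℝ, HasDerivAt
      (fun b => (∫ u in Ioi (0 : ℝ), stdNormalCDF (-(u * b)) * stdNormalPDF u) +
        (2 * Real.pi)⁻¹ * Real.arctan b) 0 b := by
    intro b
    refine HasDerivAt.congr_deriv ((hasDerivAt_integral_cdf_mul_pdf b).add
      ((Real.hasDerivAt_arctan b).const_mul (2 * Real.pi)⁻¹)) ?_
    simp
  have hconst := is_const_of_deriv_eq_zero (fun b => (hd b).differentiableAt)
    (fun b => (hd b).deriv) b 0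
  simp only [mul_zero, neg_zero, stdNormalCDF_zero, Real.arctan_zero, add_zero,
    integral_const_mul, integral_Ioi_stdNormalPDF] at hconst
  have hpi := Real.pi_ne_zero
  rw [eq_sub_of_add_eq hconst]
  field_simp

/-- Closed form of the second-moment integral, by parts from `u φ(u) = -φ'(u)`. -/
lemma integral_sq_mul_cdf_mul_pdf (b : ℝ) :
    ∫ u in Ioi (0 : ℝ), u ^ 2 * stdNormalCDF (-(u * b)) * stdNormalPDF u =
      (2 * Real.pi)⁻¹ * (Real.pi / 2 - Real.arctan b - b / (1 + b ^ 2)) := by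
  have hsymm : ∀ x, stdNormalPDF (-x) = stdNormalPDF x := fun x => by simp [stdNormalPDF_eq]
  have i0 := integrable_pow_mul_cdf_mul_pdf 0 b
  have i1 := integrable_pow_mul_cdf_mul_pdf 1 b
  have i2 := integrable_pow_mul_cdf_mul_pdf 2 b
  have ip := (integrable_mul_pdf_mul_pdf b).const_mul b
  simp only [pow_zero, one_mul, pow_one] at i0 i1
  have hd : ∀ u : ℝ, HasDerivAt
      (fun u => u * stdNormalCDF (-(u * b)) * stdNormalPDF u)
      (stdNormalCDF (-(u * b)) * stdNormalPDF u -
        b * (u * (stdNormalPDF (u * b) * stdNormalPDF u)) -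
        u ^ 2 * stdNormalCDF (-(u * b)) * stdNormalPDF u) u := by
    intro u
    have h1 : HasDerivAt (fun u : ℝ => -(u * b)) (-b) u := by
      simpa using ((hasDerivAt_id u).mul_const b).fun_neg
    have h2 := (hasDerivAt_stdNormalCDF (-(u * b))).comp u h1
    refine HasDerivAt.congr_deriv (((hasDerivAt_id u).mul h2).mul (hasDerivAt_stdNormalPDF u)) ?_
    simp only [Function.comp, id, hsymm, Pi.mul_apply]
    ring
  have hi' := ((i0.sub ip).sub i2).integrableOn (s := Ioi (0 : ℝ))
  have ht := tendsto_zero_of_hasDerivAt_of_integrableOn_Ioi (a := 0) (fun u _ => hd u)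
    hi' i1.integrableOn
  have h := integral_Ioi_of_hasDerivAt_of_tendsto' (fun u _ => hd u) hi' ht
  have h01 : Integrable (fun u => stdNormalCDF (-(u * b)) * stdNormalPDF u -
      b * (u * (stdNormalPDF (u * b) * stdNormalPDF u))) := i0.sub ip
  rw [integral_sub h01.integrableOn i2.integrableOn,
    integral_sub i0.integrableOn ip.integrableOn, integral_const_mul,
    integral_mul_pdf_mul_pdf, integral_cdf_mul_pdf] at h
  simp only [zero_mul, sub_zero] at h
  rw [← sub_eq_zero.1 h]
  ring

/-! ### The maximizer of the speed -/

/-- Up to a positive constant, the diffusion speed as a function of `b = ℓ√(cI)/2`. -/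
noncomputable def speedProfile (b : ℝ) : ℝ :=
  b ^ 2 * (Real.pi / 2 - Real.arctan b - b / (1 + b ^ 2))

/-- The factor carrying the sign of the derivative: `speedProfile' b = 2 b · speedSlope b`. -/
noncomputable def speedSlope (b : ℝ) : ℝ :=
  Real.pi / 2 - Real.arctan b - b / (1 + b ^ 2) - b / (1 + b ^ 2) ^ 2

lemma hasDerivAt_speedProfile (b : ℝ) :
    HasDerivAt speedProfile (2 * b * speedSlope b) b := by
  have hne : 1 + b ^ 2 ≠ 0 := by positivity
  have hq : HasDerivAt (fun b : ℝ => 1 + b ^ 2) (2 * b) b := by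
    simpa using (hasDerivAt_pow 2 b).const_add 1
  have h := (hasDerivAt_pow 2 b).mul
    (((Real.hasDerivAt_arctan b).const_sub (Real.pi / 2)).sub ((hasDerivAt_id b).div hq hne))
  refine h.congr_deriv ?_
  simp only [speedSlope, id, Pi.div_apply, Pi.sub_apply]
  field_simp
  push_cast
  ring

lemma hasDerivAt_speedSlope (b : ℝ) :
    HasDerivAt speedSlope ((b ^ 2 - 3) / (1 + b ^ 2) ^ 3) b := by
  have hne : 1 + b ^ 2 ≠ 0 := by positivity
  have hq : HasDerivAt (fun b : ℝ => 1 + b ^ 2) (2 * b) b := by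
    simpa using (hasDerivAt_pow 2 b).const_add 1
  have h := (((Real.hasDerivAt_arctan b).const_sub (Real.pi / 2)).sub
    ((hasDerivAt_id b).div hq hne)).sub ((hasDerivAt_id b).div (hq.pow 2) (pow_ne_zero 2 hne))
  refine h.congr_deriv ?_
  simp only [id, Pi.pow_apply]
  field_simp
  push_cast
  ring

lemma continuous_speedSlope : Continuous speedSlope :=
  continuous_iff_continuousAt.2 fun b => (hasDerivAt_speedSlope b).continuousAt

lemma continuous_speedProfile : Continuous speedProfile :=
  continuous_iff_continuousAt.2 fun b => (hasDerivAt_speedProfile b).continuousAt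

lemma speedSlope_antitoneOn : AntitoneOn speedSlope (Icc 0 √3) := by
  refine antitoneOn_of_deriv_nonpos (convex_Icc _ _) continuous_speedSlope.continuousOn
    (fun x _ => (hasDerivAt_speedSlope x).differentiableAt.differentiableWithinAt) fun x hx => ?_
  rw [interior_Icc] at hx
  rw [(hasDerivAt_speedSlope x).deriv]
  refine div_nonpos_of_nonpos_of_nonneg ?_ (by positivity)
  have h := (Real.lt_sqrt hx.1.le).1 hx.2
  linarith

lemma speedSlope_monotoneOn : MonotoneOn speedSlope (Ici √3) := by
  refine monotoneOn_of_deriv_nonneg (convex_Ici _) continuous_speedSlope.continuousOn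
    (fun x _ => (hasDerivAt_speedSlope x).differentiableAt.differentiableWithinAt) fun x hx => ?_
  rw [interior_Ici] at hx
  rw [(hasDerivAt_speedSlope x).deriv]
  refine div_nonneg ?_ (by positivity)
  have h := (Real.sqrt_lt' ((Real.sqrt_nonneg 3).trans_lt hx)).1 hx
  linarith

lemma tendsto_speedSlope : Tendsto speedSlope atTop (𝓝 0) := by
  have h1 : Tendsto (fun b : ℝ => b / (1 + b ^ 2)) atTop (𝓝 0) := by
    refine squeeze_zero' (g := fun b : ℝ => b⁻¹) ?_ ?_ tendsto_inv_atTop_zero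
    · filter_upwards [eventually_gt_atTop 0] with b hb
      positivity
    · filter_upwards [eventually_gt_atTop 0] with b hb
      rw [inv_eq_one_div, div_le_div_iff₀ (by positivity) hb]
      nlinarith
  have h2 : Tendsto (fun b : ℝ => b / (1 + b ^ 2) ^ 2) atTop (𝓝 0) := by
    refine squeeze_zero' (g := fun b : ℝ => b / (1 + b ^ 2)) ?_ ?_ h1
    · filter_upwards [eventually_gt_atTop 0] with b hb
      positivity
    · filter_upwards [eventually_gt_atTop 0] with b hb
      gcongr
      nlinarith [sq_nonneg b]
  have h3 : Tendsto Real.arctan atTop (𝓝 (Real.pi / 2)) :=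
    Real.tendsto_arctan_atTop.mono_right nhdsWithin_le_nhds
  have he : speedSlope = fun b => Real.pi / 2 - Real.arctan b - b / (1 + b ^ 2) -
      b / (1 + b ^ 2) ^ 2 := rfl
  rw [he]
  simpa using ((h3.const_sub (Real.pi / 2)).sub h1).sub h2

lemma speedSlope_nonpos_of_sqrt_three_le {b : ℝ} (hb : √3 ≤ b) : speedSlope b ≤ 0 := by
  refine ge_of_tendsto tendsto_speedSlope ?_
  filter_upwards [eventually_ge_atTop b] with x hx
  exact speedSlope_monotoneOn hb (hb.trans hx) hx

/-- A zero of `speedSlope` in `[0, √3]` maximizes `speedProfile` on `[0, ∞)`. -/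
lemma speedProfile_le_of_speedSlope_eq_zero {b₀ : ℝ} (h0 : 0 ≤ b₀) (h3 : b₀ ≤ √3)
    (hz : speedSlope b₀ = 0) {b : ℝ} (hb : 0 ≤ b) : speedProfile b ≤ speedProfile b₀ := by
  rcases le_total b b₀ with h | h
  · have hm : MonotoneOn speedProfile (Icc 0 b₀) := by
      refine monotoneOn_of_deriv_nonneg (convex_Icc _ _) continuous_speedProfile.continuousOn
        (fun x _ => (hasDerivAt_speedProfile x).differentiableAt.differentiableWithinAt)
        fun x hx => ?_
      rw [interior_Icc] at hx
      rw [(hasDerivAt_speedProfile x).deriv]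
      have := speedSlope_antitoneOn ⟨hx.1.le, hx.2.le.trans h3⟩ ⟨h0, h3⟩ hx.2.le
      rw [hz] at this
      exact mul_nonneg (by linarith [hx.1]) this
    exact hm ⟨hb, h⟩ ⟨h0, le_rfl⟩ h
  · have hm : AntitoneOn speedProfile (Ici b₀) := by
      refine antitoneOn_of_deriv_nonpos (convex_Ici _) continuous_speedProfile.continuousOn
        (fun x _ => (hasDerivAt_speedProfile x).differentiableAt.differentiableWithinAt)
        fun x hx => ?_
      rw [interior_Ici] at hx
      have hx' : b₀ < x := hx
      rw [(hasDerivAt_speedProfile x).deriv]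
      refine mul_nonpos_of_nonneg_of_nonpos (by linarith) ?_
      rcases le_total x √3 with h' | h'
      · have := speedSlope_antitoneOn ⟨h0, h3⟩ ⟨by linarith, h'⟩ hx'.le
        rwa [hz] at this
      · exact speedSlope_nonpos_of_sqrt_three_le h'
    exact hm (mem_Ici.2 le_rfl) h h

/-! ### Numerical bounds -/

lemma sub_cube_le_arctan {y : ℝ} (hy : 0 ≤ y) : y - y ^ 3 / 3 ≤ Real.arctan y := by
  have hd : ∀ x : ℝ, HasDerivAt (fun x => Real.arctan x - (x - x ^ 3 / 3))
      (x ^ 4 / (1 + x ^ 2)) x := by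
    intro x
    refine ((Real.hasDerivAt_arctan x).sub
      ((hasDerivAt_id x).sub ((hasDerivAt_pow 3 x).div_const 3))).congr_deriv ?_
    field_simp
    push_cast
    ring
  have hm : Monotone (fun x => Real.arctan x - (x - x ^ 3 / 3)) :=
    monotone_of_deriv_nonneg (fun x => (hd x).differentiableAt)
      fun x => by rw [(hd x).deriv]; positivity
  have := hm hy
  simp at this
  linarith

lemma arctan_le_sub_cube_add {y : ℝ} (hy : 0 ≤ y) :
    Real.arctan y ≤ y - y ^ 3 / 3 + y ^ 5 / 5 := by
  have hd : ∀ x : ℝ, HasDerivAt (fun x => x - x ^ 3 / 3 + x ^ 5 / 5 - Real.arctan x)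
      (x ^ 6 / (1 + x ^ 2)) x := by
    intro x
    refine ((((hasDerivAt_id x).sub ((hasDerivAt_pow 3 x).div_const 3)).add
      ((hasDerivAt_pow 5 x).div_const 5)).sub (Real.hasDerivAt_arctan x)).congr_deriv ?_
    field_simp
    push_cast
    ring
  have hm : Monotone (fun x => x - x ^ 3 / 3 + x ^ 5 / 5 - Real.arctan x) :=
    monotone_of_deriv_nonneg (fun x => (hd x).differentiableAt)
      fun x => by rw [(hd x).deriv]; positivity
  have := hm hy
  simp at this
  linarith

/-- Reduction of `arctan b` near `b = 1` to a small argument, where the Taylor bounds are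
accurate. -/
lemma arctan_eq_pi_div_four_add {b : ℝ} (hb : 0 ≤ b) :
    Real.arctan b = Real.pi / 4 + Real.arctan ((b - 1) / (b + 1)) := by
  have hb1 : b + 1 ≠ 0 := by positivity
  have hlt : 1 * ((b - 1) / (b + 1)) < 1 := by
    rw [one_mul, div_lt_one (by positivity)]; linarith
  rw [← Real.arctan_one, Real.arctan_add hlt]
  congr 1
  have : 1 - 1 * ((b - 1) / (b + 1)) ≠ 0 := by linarith
  field_simp
  ring

lemma arctan_upper : Real.arctan 1.21275 ≤ Real.pi / 4 + 0.0958536 := by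
  rw [arctan_eq_pi_div_four_add (by norm_num)]
  have := arctan_le_sub_cube_add (y := (1.21275 - 1) / (1.21275 + 1)) (by norm_num)
  norm_num at this ⊢
  linarith

lemma arctan_lower : Real.pi / 4 + 0.096053 ≤ Real.arctan 1.21325 := by
  rw [arctan_eq_pi_div_four_add (by norm_num)]
  have := sub_cube_le_arctan (y := (1.21325 - 1) / (1.21325 + 1)) (by norm_num)
  norm_num at this ⊢
  linarith

lemma exists_speedSlope_eq_zero :
    ∃ b ∈ Icc (1.21275 : ℝ) 1.21325, speedSlope b = 0 := by
  have hl : 0 ≤ speedSlope 1.21275 := by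
    have h1 := arctan_upper
    have h2 := Real.pi_gt_d6
    unfold speedSlope
    norm_num at h1 h2 ⊢
    linarith
  have hr : speedSlope 1.21325 ≤ 0 := by
    have h1 := arctan_lower
    have h2 := Real.pi_lt_d6
    unfold speedSlope
    norm_num at h1 h2 ⊢
    linarith
  exact intermediate_value_Icc' (by norm_num) continuous_speedSlope.continuousOn ⟨hr, hl⟩

/-- Bounds on the acceptance rate `4 · (2π)⁻¹ (π/2 - arctan b)` throughout the bracket. -/
lemma acceptance_mem {b : ℝ} (hb : b ∈ Icc (1.21275 : ℝ) 1.21325) :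
    4 * ((2 * Real.pi)⁻¹ * (Real.pi / 2 - Real.arctan b)) ∈ Icc (0.4385 : ℝ) 0.4395 := by
  have hpi := Real.pi_pos
  have e : 4 * ((2 * Real.pi)⁻¹ * (Real.pi / 2 - Real.arctan b)) =
      (2 * (Real.pi / 2 - Real.arctan b)) / Real.pi := by
    field_simp; ring
  have h1 := Real.pi_gt_d6
  have h2 := Real.pi_lt_d6
  -- crude bounds suffice: `arctan b - π/4` lies in `[0.0955, 0.0965]`
  have hu : Real.arctan b ≤ Real.pi / 4 + 0.0965 := by
    refine (Real.arctan_strictMono.monotone hb.2).trans ?_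
    rw [arctan_eq_pi_div_four_add (by norm_num)]
    have := arctan_le_sub_cube_add (y := (1.21325 - 1) / (1.21325 + 1)) (by norm_num)
    norm_num at this ⊢
    linarith
  have hl : Real.pi / 4 + 0.0955 ≤ Real.arctan b := by
    refine le_trans ?_ (Real.arctan_strictMono.monotone hb.1)
    rw [arctan_eq_pi_div_four_add (by norm_num)]
    have := sub_cube_le_arctan (y := (1.21275 - 1) / (1.21275 + 1)) (by norm_num)
    norm_num at this ⊢
    linarith
  rw [e]
  constructor
  · rw [le_div_iff₀ hpi]; norm_num at *; linarith
  · rw [div_le_iff₀ hpi]; norm_num at *; linarith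

/-! ### Conclusion -/

/-- In the variable `b = ℓ√(cI)/2` the speed is a fixed positive multiple of `speedProfile`. -/
lemma tmcmcGibbsSpeed_eq (c I ℓ : ℝ) (h : 0 < c * I) :
    tmcmcGibbsSpeed c I ℓ =
      16 * c / (c * I) * (2 * Real.pi)⁻¹ * speedProfile (ℓ * √(c * I) / 2) := by
  have e : ∀ u : ℝ, -(u * ℓ * √(c * I)) / 2 = -(u * (ℓ * √(c * I) / 2)) := fun u => by ring
  have hs : √(c * I) ^ 2 = c * I := Real.sq_sqrt h.le
  have hc : c ≠ 0 := left_ne_zero_of_mul h.ne'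
  have hI : I ≠ 0 := right_ne_zero_of_mul h.ne'
  simp only [tmcmcGibbsSpeed, e]
  rw [integral_sq_mul_cdf_mul_pdf, speedProfile]
  have h2 : 4 * c * ℓ ^ 2 = 16 * c / (c * I) * (ℓ * √(c * I) / 2) ^ 2 := by
    rw [div_pow, mul_pow, hs]
    field_simp
    ring
  rw [h2]
  ring

/-- **Corollary 2 (TMCMC within Gibbs, i.i.d. set-up).** For `0 < c ≤ 1` and `I > 0`, there
is a maximizer `ℓ_opt > 0` of `g_c` over `(0,∞)` with `ℓ_opt√(cI) ∈ [2.4255, 2.4265]`, and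
the acceptance rate `4∫₀^∞ Φ(−uℓ_opt√(cI)/2)φ(u)du` lies in `[0.4385, 0.4395]`. -/
theorem tmcmc_gibbs_optimal_scaling (c I : ℝ) (hc0 : 0 < c) (hc1 : c ≤ 1) (hI : 0 < I) :
    ∃ ℓ : ℝ, 0 < ℓ ∧ ℓ * Real.sqrt (c * I) ∈ Set.Icc (2.4255 : ℝ) 2.4265 ∧
      (∀ ℓ' : ℝ, 0 < ℓ' → tmcmcGibbsSpeed c I ℓ' ≤ tmcmcGibbsSpeed c I ℓ) ∧
      (4 * ∫ u in Set.Ioi (0 : ℝ),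
          stdNormalCDF (-(u * ℓ * Real.sqrt (c * I)) / 2) * stdNormalPDF u)
        ∈ Set.Icc (0.4385 : ℝ) 0.4395 := by
  have hcI : 0 < c * I := mul_pos hc0 hI
  have hs : 0 < √(c * I) := Real.sqrt_pos.2 hcI
  obtain ⟨b, hb, hz⟩ := exists_speedSlope_eq_zero
  have hb0 : 0 < b := lt_of_lt_of_le (by norm_num) hb.1
  have hb3 : b ≤ √3 := by
    refine hb.2.trans (Real.le_sqrt_of_sq_le ?_)
    norm_num
  have hmul : 2 * b / √(c * I) * √(c * I) = 2 * b := div_mul_cancel₀ _ hs.ne'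
  refine ⟨2 * b / √(c * I), by positivity, ?_, fun ℓ' hℓ' => ?_, ?_⟩
  · rw [hmul]
    constructor
    · have := hb.1
      norm_num at this ⊢
      linarith
    · have := hb.2
      norm_num at this ⊢
      linarith
  · rw [tmcmcGibbsSpeed_eq c I _ hcI, tmcmcGibbsSpeed_eq c I _ hcI, hmul,
      mul_div_cancel_left₀ b two_ne_zero]
    refine mul_le_mul_of_nonneg_left ?_ (by positivity)
    exact speedProfile_le_of_speedSlope_eq_zero hb0.le hb3 hz (by positivity)
  · have e : ∀ u : ℝ, -(u * (2 * b / √(c * I)) * √(c * I)) / 2 = -(u * b) := fun u => by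
      rw [mul_assoc, hmul]; ring
    simp only [e]
    rw [integral_cdf_mul_pdf]
    exact acceptance_mem hb
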